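/- arXiv:1908.04714 — 2 statements merged into one kernel-verified Lean document; each statement's English description precedes it below -/
import Mathlib

section
/- Assume μ > 0 and r_{−1} > 0, and let θ denote the smallest root of r̃(z) = 1 in (0,1]. Then the map (0,∞) ∋ q ↦ θ_q is a continuous, strictly decreasing bijection from (0,∞) onto (0,θ), with θ = lim_{q↓0} θ_q; moreover, for every q ∈ (0,∞), q + μ(1 − r̃(z)) > 0 for all z ∈ (θ_q, 1] and q + μ(1 − r̃(z)) < 0 for all z ∈ (0, θ_q). -/
open MeasureTheory Filter Set

/-- The probability generating function of the offspring distribution `p`. -/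
noncomputable def ptilde (p : ℕ → ℝ) (z : ℝ) : ℝ := ∑' k, p k * z ^ k

/-- The p.g.f. of the immigration/culling mechanism: `rneg` is `r_{-1}`,
`r k` for `k ≥ 1` are the immigration probabilities (we require `r 0 = 0`). -/
noncomputable def rtilde (rneg : ℝ) (r : ℕ → ℝ) (z : ℝ) : ℝ :=
  rneg / z + ∑' k, r k * z ^ k

/-- `f : ℕ → ℝ` is `q`-harmonic for the branching process with branching mechanism `p`
(rate `lam`) and immigration/culling mechanism `(rneg, r)` (rate `mu`). -/
def IsQHarmonic (lam mu q : ℝ) (p : ℕ → ℝ) (rneg : ℝ) (r : ℕ → ℝ) (f : ℕ → ℝ) : Prop :=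
  ∀ x : ℕ, 1 ≤ x →
    (q + lam * x + mu) * f x
      = lam * x * (∑' k, p k * f (x + k - 1))
        + mu * (rneg * f (x - 1) + ∑' k, r k * f (x + k))

/-- The harmonic function `Φ_q`; `φ` is the smallest fixed point of `ptilde p` in `(0,1]`
and `θ` is the delimiter `θ_q`. -/
noncomputable def Phi (lam mu : ℝ) (p : ℕ → ℝ) (rneg : ℝ) (r : ℕ → ℝ)
    (φ θ q : ℝ) (x : ℕ) : ℝ :=
  q * ∫ v in (0:ℝ)..φ,
      Real.exp (-∫ w in θ..v,
          (q + mu * (1 - rtilde rneg r w)) / (lam * |ptilde p w - w|))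
        / (lam * |ptilde p v - v|) * v ^ x

/-- The harmonic function `Ψ_q`. -/
noncomputable def Psi (lam mu : ℝ) (p : ℕ → ℝ) (rneg : ℝ) (r : ℕ → ℝ)
    (φ q : ℝ) (x : ℕ) : ℝ :=
  1 - q * ∫ v in φ..(1:ℝ),
      Real.exp (-∫ w in v..(1:ℝ),
          (q + mu * (1 - rtilde rneg r w)) / (lam * |ptilde p w - w|))
        / (lam * |ptilde p v - v|) * v ^ x

/-- Condition (E'): `∫_v^1 dz/(z - ptilde p z) < ∞` for some `v ∈ (φ, 1)`. -/
def CondE (p : ℕ → ℝ) (φ : ℝ) : Prop :=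
  ∃ v, φ < v ∧ v < 1 ∧
    IntervalIntegrable (fun z => 1 / (z - ptilde p z)) MeasureTheory.volume v 1

/-!
The function `r̃` is convex on `(0, 1]` and blows up at `0`, so it is strictly decreasing up to the
first point `θ` where it takes the value `r̃(1) = 1`, and is at most `1` on `[θ, 1]`. Hence
`z ↦ μ(r̃(z) - 1)` restricts to a strictly decreasing bijection from `(0, θ)` onto `(0, ∞)` whose
inverse is `q ↦ θ_q`; a monotone bijection between open intervals is continuous, and its one-sided
limits are the endpoints.

The junk value of `∑' k, r k` is `0` when `r` is not summable, so `r_{-1} + ∑' k, r k = 1` does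
not give summability by itself. In the divergent case `r_{-1} = 1`, and if the power series had a
positive radius of convergence `R`, then `r̃` would jump at `R` and skip values just above `1 / R`,
which the existence of all the roots `θ_q` forbids. So the series diverges at every point of
`(0, 1]`, and `r̃(z)` is `1 / z`, which is still convex.
-/

open scoped Topology

section OrderInverse

variable {α β : Type*} [LinearOrder α] [LinearOrder β] {f : α → β} {g : β → α}
  {a b c z : α} {m q : β}

lemma strictAntiOn_of_leftInvOn {s : Set α} {t : Set β} (hf : StrictAntiOn f s)
    (hg : MapsTo g t s) (hfg : LeftInvOn f g t) : StrictAntiOn g t := by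
  intro p hp q hq hpq
  rwa [← hf.lt_iff_gt (hg hp) (hg hq), hfg hp, hfg hq]

lemma mapsTo_Ioo_of_leftInvOn (hle : ∀ x ∈ Icc c b, f x ≤ m)
    (hg : MapsTo g (Ioi m) (Ioc a b)) (hfg : LeftInvOn f g (Ioi m)) :
    MapsTo g (Ioi m) (Ioo a c) := by
  refine fun q hq => ⟨(hg hq).1, lt_of_not_ge fun hcq => ?_⟩
  have hqm : f (g q) ≤ m := hle _ ⟨hcq, (hg hq).2⟩
  exact hqm.not_gt (by rwa [hfg hq])

lemma bijOn_Ioo_of_leftInvOn (hf : StrictAntiOn f (Ioc a c)) (hc : f c = m)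
    (hg : MapsTo g (Ioi m) (Ioo a c)) (hfg : LeftInvOn f g (Ioi m)) :
    BijOn g (Ioi m) (Ioo a c) := by
  have hfm : MapsTo f (Ioo a c) (Ioi m) := fun x hx =>
    hc ▸ hf (Ioo_subset_Ioc_self hx) ⟨hx.1.trans hx.2, le_rfl⟩ hx.2
  have hgf : LeftInvOn g f (Ioo a c) := fun x hx =>
    hf.injOn (Ioo_subset_Ioc_self (hg (hfm hx))) (Ioo_subset_Ioc_self hx) (hfg (hfm hx))
  exact InvOn.bijOn ⟨hfg, hgf⟩ hg hfm

lemma apply_lt_of_leftInvOn_of_lt (hf : StrictAntiOn f (Ioc a c)) (hle : ∀ x ∈ Icc c b, f x ≤ m)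
    (hg : MapsTo g (Ioi m) (Ioo a c)) (hfg : LeftInvOn f g (Ioi m)) (hq : m < q)
    (hqz : g q < z) (hzb : z ≤ b) : f z < q := by
  rcases le_or_gt z c with hzc | hcz
  · calc f z < f (g q) := hf (Ioo_subset_Ioc_self (hg hq)) ⟨(hg hq).1.trans hqz, hzc⟩ hqz
      _ = q := hfg hq
  · exact (hle z ⟨hcz.le, hzb⟩).trans_lt hq

lemma lt_apply_of_leftInvOn_of_lt (hf : StrictAntiOn f (Ioc a c))
    (hg : MapsTo g (Ioi m) (Ioo a c)) (hfg : LeftInvOn f g (Ioi m)) (hq : m < q)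
    (haz : a < z) (hzq : z < g q) : q < f z :=
  calc q = f (g q) := (hfg hq).symm
    _ < f z := hf ⟨haz, (hzq.trans (hg hq).2).le⟩ (Ioo_subset_Ioc_self (hg hq)) hzq

end OrderInverse

section Continuity

variable {α β : Type*} [LinearOrder α] [TopologicalSpace α] [OrderTopology α]
  [TopologicalSpace β] {g : α → β}

lemma continuousOn_of_strictAntiOn_of_isOpen_image [LinearOrder β] [OrderTopology β]
    [DenselyOrdered β] {s : Set α} (hg : StrictAntiOn g s) (hs : IsOpen s)
    (himage : IsOpen (g '' s)) : ContinuousOn g s := fun _ hx =>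
  (hg.dual_right.continuousAt_of_image_mem_nhds (hs.mem_nhds hx)
    (himage.mem_nhds (mem_image_of_mem g hx))).continuousWithinAt

lemma tendsto_nhdsGT_of_antitoneOn_of_image_eq_Ioo [ConditionallyCompleteLinearOrder β]
    [OrderTopology β] [DenselyOrdered β] {m : α} {a c : β} (hg : AntitoneOn g (Ioi m))
    (himage : g '' Ioi m = Ioo a c) (hac : a < c) : Tendsto g (𝓝[>] m) (𝓝 c) := by
  have hlim := hg.tendsto_nhdsGT (himage ▸ bddAbove_Ioo)
  rwa [himage, csSup_Ioo hac] at hlim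

end Continuity

section Convexity

lemma convexOn_tsum {ι E : Type*} [AddCommGroup E] [Module ℝ E] {s : Set E} {f : ι → E → ℝ}
    (hs : Convex ℝ s) (hf : ∀ i, ConvexOn ℝ s (f i)) (hsum : ∀ x ∈ s, Summable fun i => f i x) :
    ConvexOn ℝ s fun x => ∑' i, f i x := by
  refine ⟨hs, fun x hx y hy u v hu hv huv => ?_⟩
  have hux : Summable fun i => u • f i x := (hsum x hx).const_smul u
  have hvy : Summable fun i => v • f i y := (hsum y hy).const_smul v
  calc ∑' i, f i (u • x + v • y)
      ≤ ∑' i, (u • f i x + v • f i y) :=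
        (hsum _ (hs hx hy hu hv huv)).tsum_le_tsum (fun i => (hf i).2 hx hy hu hv huv)
          (hux.add hvy)
    _ = u • ∑' i, f i x + v • ∑' i, f i y := by
        rw [hux.tsum_add hvy, tsum_const_smul'', tsum_const_smul'']

lemma convexOn_const_div {c : ℝ} (hc : 0 ≤ c) : ConvexOn ℝ (Ioi 0) fun z : ℝ => c / z :=
  ((convexOn_zpow (-1)).smul hc).congr fun z _ => by simp [div_eq_mul_inv]

variable {f : ℝ → ℝ} {a c : ℝ}

lemma lt_of_forall_ne_of_tendsto_atTop {x : ℝ} (hf : ContinuousOn f (Ioo a c))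
    (hlim : Tendsto f (𝓝[>] a) atTop) (hne : ∀ x ∈ Ioo a c, f x ≠ f c) (hx : x ∈ Ioo a c) :
    f c < f x := by
  by_contra! hxc
  obtain ⟨w, hcw, haw, hwx⟩ : ∃ w, f c ≤ f w ∧ a < w ∧ w < x :=
    ((hlim.eventually_ge_atTop (f c)).and (Ioo_mem_nhdsGT hx.1)).exists
  have hsub : Icc w x ⊆ Ioo a c := fun y hy => ⟨haw.trans_le hy.1, hy.2.trans_lt hx.2⟩
  obtain ⟨y, hy, hyc⟩ := intermediate_value_Icc' hwx.le (hf.mono hsub) ⟨hxc, hcw⟩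
  exact hne y (hsub hy) hyc

lemma strictAntiOn_Ioc_of_convexOn_of_tendsto_atTop (hf : ConvexOn ℝ (Ioc a c) f)
    (hlim : Tendsto f (𝓝[>] a) atTop) (hne : ∀ x ∈ Ioo a c, f x ≠ f c) :
    StrictAntiOn f (Ioc a c) := by
  have hcont : ContinuousOn f (Ioo a c) :=
    (hf.subset Ioo_subset_Ioc_self (convex_Ioo a c)).continuousOn isOpen_Ioo
  have hlt : ∀ x ∈ Ioo a c, f c < f x := fun x hx =>
    lt_of_forall_ne_of_tendsto_atTop hcont hlim hne hx
  intro x hx y hy hxy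
  rcases hy.2.eq_or_lt with rfl | hyc
  · exact hlt x ⟨hx.1, hxy⟩
  · exact hf.strictAntiOn ⟨hx.1.trans_le (hxy.trans hyc).le, le_rfl⟩ hyc (hlt y ⟨hy.1, hyc⟩)
      ⟨hx, hxy.le⟩ ⟨hy, self_mem_Iic⟩ hxy

end Convexity

lemma Ioi_subset_image_of_leftInvOn_mul_sub {F g : ℝ → ℝ} {s : Set ℝ} {mu c : ℝ} (hmu : 0 < mu)
    (hg : MapsTo g (Ioi 0) s) (hinv : LeftInvOn (fun z => mu * (F z - c)) g (Ioi 0)) :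
    Ioi c ⊆ F '' s := by
  intro v hv
  have hq : 0 < mu * (v - c) := mul_pos hmu (sub_pos.2 hv)
  exact ⟨_, hg hq, sub_left_injective (mul_left_cancel₀ hmu.ne' (hinv hq))⟩

section PowerSeries

variable {p : ℕ → ℝ} {x y : ℝ}

lemma summable_mul_pow_of_le (hp : ∀ k, 0 ≤ p k) (hx : 0 ≤ x) (hxy : x ≤ y)
    (hy : Summable fun k => p k * y ^ k) : Summable fun k => p k * x ^ k :=
  hy.of_nonneg_of_le (fun k => mul_nonneg (hp k) (pow_nonneg hx k))
    (fun k => mul_le_mul_of_nonneg_left (pow_le_pow_left₀ hx hxy k) (hp k))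

lemma ptilde_nonneg (hp : ∀ k, 0 ≤ p k) (hx : 0 ≤ x) : 0 ≤ ptilde p x :=
  tsum_nonneg fun k => mul_nonneg (hp k) (pow_nonneg hx k)

lemma ptilde_le_ptilde (hp : ∀ k, 0 ≤ p k) (hx : 0 ≤ x) (hxy : x ≤ y)
    (hy : Summable fun k => p k * y ^ k) : ptilde p x ≤ ptilde p y :=
  (summable_mul_pow_of_le hp hx hxy hy).tsum_le_tsum
    (fun k => mul_le_mul_of_nonneg_left (pow_le_pow_left₀ hx hxy k) (hp k)) hy

lemma ptilde_pos (hp : ∀ k, 0 ≤ p k) (hp0 : p ≠ 0) (hx : 0 < x)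
    (hsum : Summable fun k => p k * x ^ k) : 0 < ptilde p x := by
  obtain ⟨k, hk⟩ := Function.ne_iff.1 hp0
  exact hsum.tsum_pos (fun j => mul_nonneg (hp j) (pow_nonneg hx.le j)) k
    (mul_pos ((hp k).lt_of_ne' hk) (pow_pos hx k))

lemma convexOn_ptilde (hp : ∀ k, 0 ≤ p k) (hy : Summable fun k => p k * y ^ k) :
    ConvexOn ℝ (Icc 0 y) (ptilde p) :=
  convexOn_tsum (convex_Icc 0 y)
    (fun k => ((convexOn_pow k).subset Icc_subset_Ici_self (convex_Icc 0 y)).smul (hp k))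
    fun _ hx => summable_mul_pow_of_le hp hx.1 hx.2 hy

lemma exists_convergence_radius (hp : ∀ k, 0 ≤ p k) (hx : 0 < x)
    (hsum : Summable fun k => p k * x ^ k) (hy : 0 < y) (hdiv : ¬ Summable fun k => p k * y ^ k) :
    ∃ R, 0 < R ∧ R ≤ y ∧ (∀ z, 0 < z → z < R → Summable fun k => p k * z ^ k) ∧
      ∀ z, R < z → ¬ Summable fun k => p k * z ^ k := by
  set D : Set ℝ := {z | Summable fun k => p k * z ^ k}
  have hDy : ∀ z ∈ D, z ≤ y := fun z hz =>
    le_of_not_gt fun hyz => hdiv (summable_mul_pow_of_le hp hy.le hyz.le hz)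
  have hbdd : BddAbove D := ⟨y, hDy⟩
  refine ⟨sSup D, hx.trans_le (le_csSup hbdd hsum), csSup_le ⟨x, hsum⟩ hDy,
    fun z hz hzR => ?_, fun z hRz hz => hRz.not_ge (le_csSup hbdd hz)⟩
  obtain ⟨w, hw, hzw⟩ := exists_lt_of_lt_csSup ⟨x, hsum⟩ hzR
  exact summable_mul_pow_of_le hp hz.le hzw.le hw

end PowerSeries

section Rtilde

variable {rneg : ℝ} {r : ℕ → ℝ} {w z : ℝ}

lemma rtilde_one (rneg : ℝ) (r : ℕ → ℝ) : rtilde rneg r 1 = rneg + ∑' k, r k := by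
  simp [rtilde]

lemma rtilde_of_not_summable (hz : ¬ Summable fun k => r k * z ^ k) :
    rtilde rneg r z = rneg / z := by
  rw [rtilde, tsum_eq_zero_of_not_summable hz, add_zero]

lemma div_le_rtilde (hr : ∀ k, 0 ≤ r k) (hz : 0 ≤ z) : rneg / z ≤ rtilde rneg r z :=
  le_add_of_nonneg_right (ptilde_nonneg hr hz)

lemma tendsto_rtilde_nhdsGT_zero (hrneg : 0 < rneg) (hr : ∀ k, 0 ≤ r k) :
    Tendsto (rtilde rneg r) (𝓝[>] 0) atTop := by
  have hdiv : Tendsto (fun z : ℝ => rneg / z) (𝓝[>] 0) atTop :=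
    tendsto_inv_nhdsGT_zero.const_mul_atTop hrneg
  refine tendsto_atTop_mono' _ ?_ hdiv
  filter_upwards [self_mem_nhdsWithin] with z hz using div_le_rtilde hr (le_of_lt hz)

lemma exists_gt_forall_rtilde_ne (hrneg : 0 < rneg) (hr : ∀ k, 0 ≤ r k) (hz : 0 < z)
    (hsum : Summable fun k => r k * z ^ k) (hw : 0 < w) (hdiv : ¬ Summable fun k => r k * w ^ k) :
    ∃ v, rneg / w < v ∧ ∀ x, 0 < x → rtilde rneg r x ≠ v := by
  obtain ⟨R, hR, hRw, hconvR, hdivR⟩ := exists_convergence_radius hr hz hsum hw hdiv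
  have hr0 : r ≠ 0 := by
    rintro rfl
    exact hdiv (by simp)
  have hhalf : 0 < R / 2 := half_pos hR
  have hsum_half : Summable fun k => r k * (R / 2) ^ k := hconvR _ hhalf (half_lt_self hR)
  -- Where the series diverges the value is at most `rneg / R`. Where it converges the value exceeds
  -- that by a fixed amount, due to `rneg / x` if `x ≤ R / 2` and to the series if `R / 2 ≤ x`.
  obtain ⟨v, hRv, hv⟩ :
      ∃ v, rneg / R < v ∧ v < min (rneg / (R / 2)) (rneg / R + ptilde r (R / 2)) :=
    exists_between <| lt_min (div_lt_div_of_pos_left hrneg hhalf (half_lt_self hR))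
      (lt_add_of_pos_right _ (ptilde_pos hr hr0 hhalf hsum_half))
  obtain ⟨hv_half, hv_add⟩ := lt_min_iff.1 hv
  refine ⟨v, (div_le_div_of_nonneg_left hrneg.le hR hRw).trans_lt hRv, fun x hx => ?_⟩
  by_cases hsum_x : Summable fun k => r k * x ^ k
  · refine ne_of_gt ?_
    rcases le_total x (R / 2) with hx_half | hx_half
    · calc v < rneg / (R / 2) := hv_half
        _ ≤ rneg / x := div_le_div_of_nonneg_left hrneg.le hx hx_half
        _ ≤ rtilde rneg r x := div_le_rtilde hr hx.le
    · have hxR : x ≤ R := le_of_not_gt fun hRx => hdivR x hRx hsum_x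
      calc v < rneg / R + ptilde r (R / 2) := hv_add
        _ ≤ rneg / x + ptilde r x :=
          add_le_add (div_le_div_of_nonneg_left hrneg.le hx hxR)
            (ptilde_le_ptilde hr hhalf.le hx_half hsum_x)
  · have hRx : R ≤ x := le_of_not_gt fun hxR => hsum_x (hconvR x hx hxR)
    rw [rtilde_of_not_summable hsum_x]
    exact ((div_le_div_of_nonneg_left hrneg.le hR hRx).trans_lt hRv).ne

lemma convexOn_rtilde (hrneg : 0 ≤ rneg) (hr : ∀ k, 0 ≤ r k) (hsum : Summable r) :
    ConvexOn ℝ (Ioc 0 1) (rtilde rneg r) :=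
  ((convexOn_const_div hrneg).subset Ioc_subset_Ioi_self (convex_Ioc 0 1)).add
    ((convexOn_ptilde hr (by simpa using hsum)).subset Ioc_subset_Icc_self (convex_Ioc 0 1))

lemma convexOn_rtilde_of_Ioi_subset_image (hrneg : 0 < rneg) (hr : ∀ k, 0 ≤ r k)
    (himage : Ioi (rneg + ∑' k, r k) ⊆ rtilde rneg r '' Ioi 0) :
    ConvexOn ℝ (Ioc 0 1) (rtilde rneg r) := by
  by_cases hsum : Summable r
  · exact convexOn_rtilde hrneg.le hr hsum
  have hdiv : ∀ z, 0 < z → ¬ Summable fun k => r k * z ^ k := by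
    intro z hz hsum_z
    obtain ⟨v, hv, hne⟩ :=
      exists_gt_forall_rtilde_ne hrneg hr hz hsum_z one_pos (by simpa using hsum)
    obtain ⟨x, hx, rfl⟩ : v ∈ rtilde rneg r '' Ioi 0 :=
      himage (by simpa [tsum_eq_zero_of_not_summable hsum] using hv)
    exact hne x hx rfl
  exact ((convexOn_const_div hrneg.le).subset Ioc_subset_Ioi_self (convex_Ioc 0 1)).congr
    fun z hz => (rtilde_of_not_summable (hdiv z hz.1)).symm

lemma strictAntiOn_rtilde_Ioc {θ : ℝ} (hrneg : 0 < rneg) (hr : ∀ k, 0 ≤ r k)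
    (hconv : ConvexOn ℝ (Ioc 0 1) (rtilde rneg r)) (hθ : θ ∈ Ioc (0 : ℝ) 1)
    (hmin : ∀ z ∈ Ioc (0 : ℝ) 1, rtilde rneg r z = rtilde rneg r θ → θ ≤ z) :
    StrictAntiOn (rtilde rneg r) (Ioc 0 θ) :=
  strictAntiOn_Ioc_of_convexOn_of_tendsto_atTop
    (hconv.subset (Ioc_subset_Ioc_right hθ.2) (convex_Ioc 0 θ))
    (tendsto_rtilde_nhdsGT_zero hrneg hr)
    fun z hz hzθ => hz.2.not_ge (hmin z ⟨hz.1, hz.2.le.trans hθ.2⟩ hzθ)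

end Rtilde

/-- with `μ > 0`, `r_{-1} > 0` and `θ` the smallest root of `r̃(z) = 1` in `(0,1]`,
the map `q ↦ θ_q` is a continuous, strictly decreasing bijection from `(0,∞)` onto `(0,θ)`,
with `θ = lim_{q↓0} θ_q`; moreover `q + μ(1 - r̃(z)) > 0` for `z ∈ (θ_q, 1]` and
`q + μ(1 - r̃(z)) < 0` for `z ∈ (0, θ_q)`. -/
theorem stmt1 (mu rneg : ℝ) (r : ℕ → ℝ) (θf : ℝ → ℝ) (θ : ℝ)
    (hmu : 0 < mu) (hrneg : 0 < rneg)
    (hr : ∀ k, 0 ≤ r k) (hr0 : r 0 = 0)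
    (hrsum : rneg + ∑' k, r k = 1)
    -- `θf q` is the unique root in `(0,1)` of `q = μ(r̃(z) - 1)`, for `q > 0`
    (hθf : ∀ q : ℝ, 0 < q →
      θf q ∈ Set.Ioo (0:ℝ) 1 ∧ q = mu * (rtilde rneg r (θf q) - 1))
    -- `θ` is the smallest root of `r̃(z) = 1` in `(0,1]`
    (hθmem : θ ∈ Set.Ioc (0:ℝ) 1) (hθroot : rtilde rneg r θ = 1)
    (hθmin : ∀ z ∈ Set.Ioc (0:ℝ) 1, rtilde rneg r z = 1 → θ ≤ z) :
    ContinuousOn θf (Set.Ioi 0) ∧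
    StrictAntiOn θf (Set.Ioi 0) ∧
    Set.BijOn θf (Set.Ioi 0) (Set.Ioo 0 θ) ∧
    Filter.Tendsto θf (nhdsWithin 0 (Set.Ioi 0)) (nhds θ) ∧
    (∀ q : ℝ, 0 < q → ∀ z : ℝ, θf q < z → z ≤ 1 →
      0 < q + mu * (1 - rtilde rneg r z)) ∧
    (∀ q : ℝ, 0 < q → ∀ z : ℝ, 0 < z → z < θf q →
      q + mu * (1 - rtilde rneg r z) < 0) := by
  set f : ℝ → ℝ := fun z => mu * (rtilde rneg r z - 1)
  have hinv : LeftInvOn f θf (Ioi 0) := fun q hq => (hθf q hq).2.symm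
  have hconv : ConvexOn ℝ (Ioc 0 1) (rtilde rneg r) :=
    convexOn_rtilde_of_Ioi_subset_image hrneg hr <| hrsum ▸
      Ioi_subset_image_of_leftInvOn_mul_sub hmu (fun q hq => (hθf q hq).1.1) hinv
  have hf : StrictAntiOn f (Ioc 0 θ) := fun x hx y hy hxy =>
    mul_lt_mul_of_pos_left (sub_lt_sub_right
      (strictAntiOn_rtilde_Ioc hrneg hr hconv hθmem (hθroot.symm ▸ hθmin) hx hy hxy) 1) hmu
  have hle_one : ∀ z ∈ Icc θ 1, rtilde rneg r z ≤ 1 := fun z hz => by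
    simpa [hθroot, rtilde_one, hrsum] using
      hconv.le_max_of_mem_Icc hθmem (right_mem_Ioc.2 one_pos) hz
  have hfle : ∀ z ∈ Icc θ 1, f z ≤ 0 := fun z hz =>
    mul_nonpos_of_nonneg_of_nonpos hmu.le (sub_nonpos.2 (hle_one z hz))
  have hmaps : MapsTo θf (Ioi 0) (Ioo 0 θ) :=
    mapsTo_Ioo_of_leftInvOn hfle (fun q hq => Ioo_subset_Ioc_self (hθf q hq).1) hinv
  have hanti := strictAntiOn_of_leftInvOn hf (hmaps.mono_right Ioo_subset_Ioc_self) hinv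
  have hbij := bijOn_Ioo_of_leftInvOn hf (by simp [f, hθroot]) hmaps hinv
  refine ⟨continuousOn_of_strictAntiOn_of_isOpen_image hanti isOpen_Ioi
      (hbij.image_eq ▸ isOpen_Ioo), hanti, hbij,
    tendsto_nhdsGT_of_antitoneOn_of_image_eq_Ioo hanti.antitoneOn hbij.image_eq hθmem.1,
    fun q hq z hqz hz1 => ?_, fun q hq z hz hzq => ?_⟩
  · linarith [apply_lt_of_leftInvOn_of_lt hf hfle hmaps hinv hq hqz hz1]
  · linarith [lt_apply_of_leftInvOn_of_lt hf hmaps hinv hq hz hzq]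
end

section
/- Assume μ = 0 and let q ∈ (0,∞) (so θ_q = 0 and γ_q(v) = q/(λ(p̃(v) − v)) on (0,φ*)). Then for every x ∈ ℕ₀: Φ_q(x) = 1_{x=0} + x ∫_0^{φ*} v^{x−1} exp{−q ∫_0^v dw/(λ(p̃(w) − w))} dv. If moreover condition (E') holds, then for every x ∈ ℕ₀: Ψ_q(x) = x ∫_{φ*}^1 v^{x−1} exp{−q ∫_v^1 dw/(λ(w − p̃(w)))} dv. -/
open MeasureTheory Filter Set

/-!
Write `γ = q / (λ |p̃ - id|)` for the hazard rate. Then `exp (-∫₀ᵛ γ)` is a survival function on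
`[0, φ)` with density `γ(v) exp (-∫₀ᵛ γ)`, and the first formula is integration by parts of this
density against `v ↦ v ^ x`. The boundary term at `φ` vanishes because `γ` is not integrable there:
since `p̃` is increasing and fixes `φ`, the value `p̃ w` lies between `w` and `φ`, so
`γ(w) ≥ q / (λ |w - φ|)`. On `(φ, 1]` the same argument runs backwards from `1`, where (E') makes
the survival function `exp (-∫ᵥ¹ γ)` start at `1`.
-/

section IntegrationByParts

open scoped Topology

variable {a b : ℝ} {f f' g : ℝ → ℝ}

lemma integral_deriv_mul_eq_of_nonneg_of_tendsto {u u' : ℝ → ℝ} {ua ub : ℝ} (hab : a < b)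
    (hu : ∀ v ∈ Ioo a b, HasDerivAt u (u' v) v) (hu' : ∀ v ∈ Ioo a b, 0 ≤ u' v)
    (hua : Tendsto u (𝓝[>] a) (𝓝 ua)) (hub : Tendsto u (𝓝[<] b) (𝓝 ub))
    (hf : ContinuousOn f (Icc a b)) (hff' : ∀ v ∈ Ioo a b, HasDerivAt f (f' v) v)
    (hf' : IntervalIntegrable f' volume a b) :
    ∫ v in a..b, u' v * f v = ub * f b - ua * f a - ∫ v in a..b, u v * f' v := by
  have hu_cont : ContinuousOn u (Ioo a b) := fun v hv => (hu v hv).continuousAt.continuousWithinAt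
  set U := extendFrom (Ioo a b) u with hU_def
  have hU : ContinuousOn U (Icc a b) := continuousOn_Icc_extendFrom_Ioo hu_cont hua hub
  have hUu : EqOn U u (Ioo a b) := fun v hv =>
    extendFrom_eq (subset_closure hv) (hu_cont v hv)
  have hUu' : ∀ v ∈ Ioo a b, HasDerivAt U (u' v) v := fun v hv =>
    (hu v hv).congr_of_eventuallyEq (hUu.eventuallyEq_of_mem (Ioo_mem_nhds hv.1 hv.2))
  have hu'_int : IntervalIntegrable u' volume a b :=
    (intervalIntegrable_iff_integrableOn_Ioc_of_le hab.le).2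
      (intervalIntegral.integrableOn_deriv_of_nonneg hU hUu' hu')
  have hparts := intervalIntegral.integral_mul_deriv_eq_deriv_mul_of_hasDerivAt (u := f) (v := U)
    (by rwa [uIcc_of_le hab.le]) (by rwa [uIcc_of_le hab.le])
    (by rwa [min_eq_left hab.le, max_eq_right hab.le])
    (by rwa [min_eq_left hab.le, max_eq_right hab.le]) hf' hu'_int
  have hUf' : ∫ v in a..b, f' v * U v = ∫ v in a..b, u v * f' v :=
    intervalIntegral.integral_congr_Ioo_of_le hab.le fun v hv => by
      simp only [hUu hv, mul_comm]
  rw [hUf', hU_def, eq_lim_at_left_extendFrom_Ioo hab hua,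
    eq_lim_at_right_extendFrom_Ioo hab hub] at hparts
  simpa only [mul_comm] using hparts

lemma tendsto_integral_atTop_of_not_intervalIntegrable (hab : a < b)
    (hg : ∀ w ∈ Ioo a b, 0 ≤ g w) (hgi : ∀ c ∈ Ioo a b, IntervalIntegrable g volume a c)
    (hdiv : ¬ IntervalIntegrable g volume a b) :
    Tendsto (fun v => ∫ w in a..v, g w) (𝓝[<] b) atTop := by
  refine tendsto_atTop.2 fun M => ?_
  obtain ⟨c, hc, hMc⟩ : ∃ c ∈ Ioo a b, M ≤ ∫ w in a..c, g w := by
    by_contra! hbdd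
    obtain ⟨u, -, hu, hub⟩ := exists_seq_strictMono_tendsto' hab
    refine hdiv ((intervalIntegrable_iff_integrableOn_Ioc_of_le hab.le).2
      (integrableOn_Ioc_of_intervalIntegral_norm_bounded_right (I := M)
        (fun n => (hgi (u n) (hu n)).1) hub (Eventually.of_forall fun n => ?_)))
    have hnorm : ∫ w in Ioc a (u n), ‖g w‖ = ∫ w in Ioc a (u n), g w :=
      setIntegral_congr_fun measurableSet_Ioc fun w hw =>
        Real.norm_of_nonneg (hg w ⟨hw.1, hw.2.trans_lt (hu n).2⟩)
    rw [hnorm, ← intervalIntegral.integral_of_le (hu n).1.le]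
    exact (hbdd (u n) (hu n)).le
  filter_upwards [Ioo_mem_nhdsLT hc.2] with v hv
  have hg_ae : 0 ≤ᵐ[volume.restrict (Ioc a v)] g :=
    ae_restrict_of_forall_mem measurableSet_Ioc fun w hw => hg w ⟨hw.1, hw.2.trans_lt hv.2⟩
  exact hMc.trans (intervalIntegral.integral_mono_interval le_rfl hc.1.le hv.1.le hg_ae
    (hgi v ⟨hc.1.trans hv.1, hv.2⟩))

lemma tendsto_integral_nhdsGT_left {c : ℝ} (hac : a < c) (hg : IntervalIntegrable g volume a c) :
    Tendsto (fun v => ∫ w in a..v, g w) (𝓝[>] a) (𝓝 0) := by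
  have hcont : ContinuousWithinAt (fun v => ∫ w in a..v, g w) (Icc a c) a := by
    rw [← uIcc_of_le hac.le]
    exact intervalIntegral.continuousOn_primitive_interval' hg left_mem_uIcc a left_mem_uIcc
  simpa only [intervalIntegral.integral_same] using
    hcont.tendsto.mono_left (nhdsWithin_le_of_mem (Icc_mem_nhdsGT hac))

lemma integral_exp_neg_integral_left_mul (hab : a < b) (hg_cont : ContinuousOn g (Ioo a b))
    (hg : ∀ w ∈ Ioo a b, 0 ≤ g w) (hgi : ∀ c ∈ Ioo a b, IntervalIntegrable g volume a c)
    (hdiv : ¬ IntervalIntegrable g volume a b)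
    (hf : ContinuousOn f (Icc a b)) (hff' : ∀ v ∈ Ioo a b, HasDerivAt f (f' v) v)
    (hf' : IntervalIntegrable f' volume a b) :
    ∫ v in a..b, Real.exp (-∫ w in a..v, g w) * g v * f v
      = f a + ∫ v in a..b, Real.exp (-∫ w in a..v, g w) * f' v := by
  have hderiv : ∀ v ∈ Ioo a b, HasDerivAt (fun v => -Real.exp (-∫ w in a..v, g w))
      (Real.exp (-∫ w in a..v, g w) * g v) v := fun v hv => by
    have hprim : HasDerivAt (fun v => ∫ w in a..v, g w) (g v) v :=
      intervalIntegral.integral_hasDerivAt_right (hgi v hv)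
        (hg_cont.stronglyMeasurableAtFilter isOpen_Ioo v hv)
        (hg_cont.continuousAt (Ioo_mem_nhds hv.1 hv.2))
    exact hprim.fun_neg.exp.fun_neg.congr_deriv (by ring)
  have hstart : Tendsto (fun v => -Real.exp (-∫ w in a..v, g w)) (𝓝[>] a) (𝓝 (-1)) := by
    obtain ⟨c, hc⟩ := exists_between hab
    simpa using ((tendsto_integral_nhdsGT_left hc.1 (hgi c hc)).neg.rexp).neg
  have hend : Tendsto (fun v => -Real.exp (-∫ w in a..v, g w)) (𝓝[<] b) (𝓝 0) := by
    simpa using (Real.tendsto_exp_neg_atTop_nhds_zero.comp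
      (tendsto_integral_atTop_of_not_intervalIntegrable hab hg hgi hdiv)).neg
  rw [integral_deriv_mul_eq_of_nonneg_of_tendsto hab hderiv
    (fun v hv => mul_nonneg (Real.exp_nonneg _) (hg v hv)) hstart hend hf hff' hf']
  simp only [neg_mul, intervalIntegral.integral_neg]
  ring

lemma integral_exp_neg_integral_right_mul (hab : a < b) (hg_cont : ContinuousOn g (Ioo a b))
    (hg : ∀ w ∈ Ioo a b, 0 ≤ g w) (hgi : ∀ c ∈ Ioo a b, IntervalIntegrable g volume c b)
    (hdiv : ¬ IntervalIntegrable g volume a b)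
    (hf : ContinuousOn f (Icc a b)) (hff' : ∀ v ∈ Ioo a b, HasDerivAt f (f' v) v)
    (hf' : IntervalIntegrable f' volume a b) :
    ∫ v in a..b, Real.exp (-∫ w in v..b, g w) * g v * f v
      = f b - ∫ v in a..b, Real.exp (-∫ w in v..b, g w) * f' v := by
  have hIoo : MapsTo Neg.neg (Ioo (-b) (-a)) (Ioo a b) := fun v hv =>
    ⟨lt_neg_of_lt_neg hv.2, neg_lt_of_neg_lt hv.1⟩
  have hIcc : MapsTo Neg.neg (Icc (-b) (-a)) (Icc a b) := fun v hv =>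
    ⟨le_neg_of_le_neg hv.2, neg_le_of_neg_le hv.1⟩
  have hrefl := integral_exp_neg_integral_left_mul (a := -b) (b := -a) (g := fun w => g (-w))
    (f := fun v => f (-v)) (f' := fun v => -f' (-v)) (neg_lt_neg hab)
    (hg_cont.comp continuousOn_neg hIoo) (fun w hw => hg (-w) (hIoo hw))
    (fun c hc => by
      simpa using ((IntervalIntegrable.iff_comp_neg (by simp)).1 (hgi (-c) (hIoo hc))).symm)
    (fun h => hdiv ((IntervalIntegrable.iff_comp_neg (by simp)).2 h.symm))
    (hf.comp continuousOn_neg hIcc)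
    (fun v hv => by
      simpa only [Function.comp_def, mul_neg_one] using
        (hff' (-v) (hIoo hv)).comp v (hasDerivAt_neg v))
    ((IntervalIntegrable.iff_comp_neg (by simp)).1 hf').symm.neg
  have hprim (v : ℝ) : ∫ w in -b..v, g (-w) = ∫ w in -v..b, g w := by
    rw [intervalIntegral.integral_comp_neg, neg_neg]
  simp only [hprim, mul_neg, intervalIntegral.integral_neg, neg_neg] at hrefl
  rw [intervalIntegral.integral_comp_neg
      (fun v => Real.exp (-∫ w in v..b, g w) * g v * f v),
    intervalIntegral.integral_comp_neg (fun v => Real.exp (-∫ w in v..b, g w) * f' v)] at hrefl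
  simpa only [neg_neg, ← sub_eq_add_neg] using hrefl

lemma not_intervalIntegrable_of_const_mul_abs_sub_inv_le {c K : ℝ} (hab : a < b) (hc : c ∈ Icc a b)
    (hK : 0 < K) (hg : ∀ w ∈ Ioo a b, K * |w - c|⁻¹ ≤ g w) :
    ¬ IntervalIntegrable g volume a b := by
  intro hgi
  have hinv : IntervalIntegrable (fun w => (w - c)⁻¹) volume a b := by
    refine (hgi.const_mul K⁻¹).mono_fun' (by fun_prop) ?_
    rw [uIoc_of_le hab.le, ← restrict_Ioo_eq_restrict_Ioc]
    refine ae_restrict_of_forall_mem measurableSet_Ioo fun w hw => ?_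
    simpa only [norm_inv, Real.norm_eq_abs] using (le_inv_mul_iff₀ hK).2 (hg w hw)
  rw [intervalIntegrable_sub_inv_iff, uIcc_of_le hab.le] at hinv
  exact hinv.elim hab.ne fun h => h hc

end IntegrationByParts

section GeneratingFunction

variable {p : ℕ → ℝ}

lemma ptilde_zero (p : ℕ → ℝ) : ptilde p 0 = p 0 := by
  rw [ptilde, tsum_eq_single 0 fun k hk => by rw [zero_pow hk, mul_zero], pow_zero, mul_one]

lemma monotoneOn_ptilde (hp : ∀ k, 0 ≤ p k) (hsum : Summable p) :
    MonotoneOn (ptilde p) (Icc 0 1) := by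
  have hsummable : ∀ z ∈ Icc (0 : ℝ) 1, Summable fun k => p k * z ^ k := fun z hz =>
    hsum.of_nonneg_of_le (fun k => mul_nonneg (hp k) (pow_nonneg hz.1 k))
      fun k => mul_le_of_le_one_right (hp k) (pow_le_one₀ hz.1 hz.2)
  exact fun y hy z hz hyz => (hsummable y hy).tsum_le_tsum
    (fun k => mul_le_mul_of_nonneg_left (pow_le_pow_left₀ hy.1 hyz k) (hp k)) (hsummable z hz)

lemma continuousOn_ptilde (hp : ∀ k, 0 ≤ p k) (hsum : Summable p) :
    ContinuousOn (ptilde p) (Icc 0 1) := by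
  refine continuousOn_tsum (fun k => by fun_prop) hsum fun k z hz => ?_
  rw [Real.norm_of_nonneg (mul_nonneg (hp k) (pow_nonneg hz.1 k))]
  exact mul_le_of_le_one_right (hp k) (pow_le_one₀ hz.1 hz.2)

end GeneratingFunction

/-- The function `γ_q = q / ρ` of the paper for `μ = 0`, read as the hazard rate of the survival
functions in `Φ_q` and `Ψ_q`. At fixed points of `ptilde p` it takes the value `0`. -/
noncomputable def hazardRate (lam : ℝ) (p : ℕ → ℝ) (q v : ℝ) : ℝ :=
  q / (lam * |ptilde p v - v|)

section HazardRate

variable {lam q : ℝ} {p : ℕ → ℝ} {φ : ℝ}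

lemma Phi_eq_integral_hazardRate (lam q : ℝ) (p : ℕ → ℝ) (φ θ : ℝ) (x : ℕ) :
    Phi lam 0 p 0 (fun _ => 0) φ θ q x
      = ∫ v in (0 : ℝ)..φ,
          Real.exp (-∫ w in θ..v, hazardRate lam p q w) * hazardRate lam p q v * v ^ x := by
  simp only [Phi, hazardRate, zero_mul, add_zero, ← intervalIntegral.integral_const_mul]
  exact intervalIntegral.integral_congr fun v _ => by ring

lemma Psi_eq_one_sub_integral_hazardRate (lam q : ℝ) (p : ℕ → ℝ) (φ : ℝ) (x : ℕ) :
    Psi lam 0 p 0 (fun _ => 0) φ q x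
      = 1 - ∫ v in φ..(1 : ℝ),
          Real.exp (-∫ w in v..1, hazardRate lam p q w) * hazardRate lam p q v * v ^ x := by
  simp only [Psi, hazardRate, zero_mul, add_zero, ← intervalIntegral.integral_const_mul]
  exact congrArg _ (intervalIntegral.integral_congr fun v _ => by ring)

lemma hazardRate_eq_of_lt_ptilde {w : ℝ} (hw : w < ptilde p w) :
    hazardRate lam p q w = q * (1 / (lam * (ptilde p w - w))) := by
  rw [hazardRate, abs_of_pos (sub_pos.2 hw), mul_one_div]

lemma hazardRate_eq_of_ptilde_lt {w : ℝ} (hw : ptilde p w < w) :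
    hazardRate lam p q w = q * (1 / (lam * (w - ptilde p w))) := by
  rw [hazardRate, abs_sub_comm, abs_of_pos (sub_pos.2 hw), mul_one_div]

lemma hazardRate_nonneg (hlam : 0 ≤ lam) (hq : 0 ≤ q) (w : ℝ) : 0 ≤ hazardRate lam p q w := by
  unfold hazardRate
  positivity

lemma continuousOn_hazardRate (hlam : lam ≠ 0) (hp : ∀ k, 0 ≤ p k) (hsum : Summable p) {s : Set ℝ}
    (hs : s ⊆ Icc 0 1) (hne : ∀ w ∈ s, ptilde p w ≠ w) :
    ContinuousOn (hazardRate lam p q) s :=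
  continuousOn_const.div
    (continuousOn_const.mul (((continuousOn_ptilde hp hsum).mono hs).sub continuousOn_id).abs)
    fun w hw => mul_ne_zero hlam (abs_ne_zero.2 (sub_ne_zero.2 (hne w hw)))

lemma div_mul_abs_sub_inv_le_hazardRate (hlam : 0 < lam) (hq : 0 ≤ q) {w : ℝ}
    (hne : ptilde p w ≠ w) (hbetween : ptilde p w ∈ uIcc w φ) :
    q / lam * |w - φ|⁻¹ ≤ hazardRate lam p q w := by
  have hdist : |ptilde p w - w| ≤ |w - φ| := by
    rw [abs_sub_comm w φ]
    exact abs_sub_left_of_mem_uIcc hbetween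
  have hpos : 0 < |ptilde p w - w| := abs_pos.2 (sub_ne_zero.2 hne)
  rw [hazardRate, ← div_div, div_eq_mul_inv _ |ptilde p w - w|]
  exact mul_le_mul_of_nonneg_left (inv_anti₀ hpos hdist) (div_nonneg hq hlam.le)

lemma not_intervalIntegrable_hazardRate (hlam : 0 < lam) (hq : 0 < q) {a b : ℝ} (hab : a < b)
    (hφ : φ ∈ Icc a b) (hne : ∀ w ∈ Ioo a b, ptilde p w ≠ w)
    (hbetween : ∀ w ∈ Ioo a b, ptilde p w ∈ uIcc w φ) :
    ¬ IntervalIntegrable (hazardRate lam p q) volume a b :=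
  not_intervalIntegrable_of_const_mul_abs_sub_inv_le hab hφ (div_pos hq hlam) fun w hw =>
    div_mul_abs_sub_inv_le_hazardRate hlam hq.le (hne w hw) (hbetween w hw)

lemma integral_exp_neg_hazardRate_left_mul_pow (hlam : 0 < lam) (hp : ∀ k, 0 ≤ p k)
    (hsum : Summable p) (hp0 : 0 < p 0) (hφ0 : 0 < φ) (hφ1 : φ ≤ 1) (hφfix : ptilde p φ = φ)
    (hφlo : ∀ z : ℝ, 0 < z → z < φ → z < ptilde p z) (hq : 0 < q) (x : ℕ) :
    ∫ v in (0 : ℝ)..φ,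
        Real.exp (-∫ w in 0..v, hazardRate lam p q w) * hazardRate lam p q v * v ^ x
      = 0 ^ x + ∫ v in (0 : ℝ)..φ,
          Real.exp (-∫ w in 0..v, hazardRate lam p q w) * (x * v ^ (x - 1)) := by
  have hlt : ∀ w ∈ Ico 0 φ, w < ptilde p w := by
    rintro w ⟨hw0, hwφ⟩
    rcases hw0.eq_or_lt with rfl | hw0
    · rwa [ptilde_zero]
    · exact hφlo w hw0 hwφ
  have hcont : ContinuousOn (hazardRate lam p q) (Ico 0 φ) :=
    continuousOn_hazardRate hlam.ne' hp hsum
      (fun w hw => ⟨hw.1, hw.2.le.trans hφ1⟩) fun w hw => (hlt w hw).ne'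
  have hint : ∀ c ∈ Ioo 0 φ, IntervalIntegrable (hazardRate lam p q) volume 0 c := fun c hc =>
    (hcont.mono (Icc_subset_Ico_right hc.2)).intervalIntegrable_of_Icc hc.1.le
  have hbetween : ∀ w ∈ Ioo 0 φ, ptilde p w ∈ uIcc w φ := fun w hw => by
    refine mem_uIcc_of_le (hφlo w hw.1 hw.2).le ?_
    rw [← hφfix]
    exact monotoneOn_ptilde hp hsum ⟨hw.1.le, hw.2.le.trans hφ1⟩ ⟨hφ0.le, hφ1⟩ hw.2.le
  have hdiv : ¬ IntervalIntegrable (hazardRate lam p q) volume 0 φ :=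
    not_intervalIntegrable_hazardRate hlam hq hφ0 (right_mem_Icc.2 hφ0.le)
      (fun w hw => (hφlo w hw.1 hw.2).ne') hbetween
  exact integral_exp_neg_integral_left_mul hφ0 (hcont.mono Ioo_subset_Ico_self)
    (fun w _ => hazardRate_nonneg hlam.le hq.le w) hint hdiv
    (by fun_prop) (fun v _ => hasDerivAt_pow x v) (Continuous.intervalIntegrable (by fun_prop) _ _)

lemma CondE.intervalIntegrable_hazardRate (hE : CondE p φ) (hlam : lam ≠ 0) (hp : ∀ k, 0 ≤ p k)
    (hsum : Summable p) (hφ0 : 0 ≤ φ) (hφhi : ∀ z : ℝ, φ < z → z < 1 → ptilde p z < z)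
    {c : ℝ} (hc : c ∈ Ioo φ 1) : IntervalIntegrable (hazardRate lam p q) volume c 1 := by
  obtain ⟨d, hφd, hd1, hd⟩ := hE
  have hcd : IntervalIntegrable (hazardRate lam p q) volume c d := by
    have hsub : uIcc c d ⊆ Ioo φ 1 := ordConnected_Ioo.uIcc_subset hc ⟨hφd, hd1⟩
    exact (continuousOn_hazardRate hlam hp hsum
      (fun w hw => ⟨hφ0.trans (hsub hw).1.le, (hsub hw).2.le⟩)
      fun w hw => (hφhi w (hsub hw).1 (hsub hw).2).ne).intervalIntegrable
  refine hcd.trans ((hd.const_mul (q / lam)).congr_uIoo fun w hw => ?_)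
  rw [uIoo_of_le hd1.le] at hw
  simp only [hazardRate_eq_of_ptilde_lt (hφhi w (hφd.trans hw.1) hw.2), mul_one_div, div_div]

lemma integral_exp_neg_hazardRate_right_mul_pow (hlam : 0 < lam) (hp : ∀ k, 0 ≤ p k)
    (hsum : Summable p) (hφ0 : 0 ≤ φ) (hφfix : ptilde p φ = φ)
    (hφhi : ∀ z : ℝ, φ < z → z < 1 → ptilde p z < z) (hq : 0 < q) (hE : CondE p φ) (x : ℕ) :
    ∫ v in φ..(1 : ℝ),
        Real.exp (-∫ w in v..1, hazardRate lam p q w) * hazardRate lam p q v * v ^ x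
      = 1 - ∫ v in φ..(1 : ℝ),
          Real.exp (-∫ w in v..1, hazardRate lam p q w) * (x * v ^ (x - 1)) := by
  have hφ1 : φ < 1 := let ⟨_, hφd, hd1, _⟩ := hE; hφd.trans hd1
  have hcont : ContinuousOn (hazardRate lam p q) (Ioo φ 1) :=
    continuousOn_hazardRate hlam.ne' hp hsum
      (fun w hw => ⟨hφ0.trans hw.1.le, hw.2.le⟩) fun w hw => (hφhi w hw.1 hw.2).ne
  have hbetween : ∀ w ∈ Ioo φ 1, ptilde p w ∈ uIcc w φ := fun w hw => by
    refine mem_uIcc_of_ge ?_ (hφhi w hw.1 hw.2).le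
    conv_lhs => rw [← hφfix]
    exact monotoneOn_ptilde hp hsum ⟨hφ0, hφ1.le⟩ ⟨hφ0.trans hw.1.le, hw.2.le⟩ hw.1.le
  have hdiv : ¬ IntervalIntegrable (hazardRate lam p q) volume φ 1 :=
    not_intervalIntegrable_hazardRate hlam hq hφ1 (left_mem_Icc.2 hφ1.le)
      (fun w hw => (hφhi w hw.1 hw.2).ne) hbetween
  have hparts := integral_exp_neg_integral_right_mul (f := fun v => v ^ x) hφ1 hcont
    (fun w _ => hazardRate_nonneg hlam.le hq.le w)
    (fun c hc => hE.intervalIntegrable_hazardRate hlam.ne' hp hsum hφ0 hφhi hc) hdiv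
    (by fun_prop) (fun v _ => hasDerivAt_pow x v) (Continuous.intervalIntegrable (by fun_prop) _ _)
  rwa [one_pow] at hparts

end HazardRate

theorem Phi_eq_ite_add_integral {lam q φ : ℝ} {p : ℕ → ℝ} (hlam : 0 < lam) (hp : ∀ k, 0 ≤ p k)
    (hsum : Summable p) (hp0 : 0 < p 0) (hφ0 : 0 < φ) (hφ1 : φ ≤ 1) (hφfix : ptilde p φ = φ)
    (hφlo : ∀ z : ℝ, 0 < z → z < φ → z < ptilde p z) (hq : 0 < q) (x : ℕ) :
    Phi lam 0 p 0 (fun _ => 0) φ 0 q x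
      = (if x = 0 then 1 else 0)
        + x * ∫ v in (0:ℝ)..φ, v ^ (x - 1) *
            Real.exp (-(q * ∫ w in (0:ℝ)..v, 1 / (lam * (ptilde p w - w)))) := by
  have hprim : ∀ v ∈ Ioo 0 φ, ∫ w in (0 : ℝ)..v, hazardRate lam p q w
      = q * ∫ w in (0 : ℝ)..v, 1 / (lam * (ptilde p w - w)) := fun v hv => by
    rw [← intervalIntegral.integral_const_mul]
    exact intervalIntegral.integral_congr_Ioo_of_le hv.1.le fun w hw =>
      hazardRate_eq_of_lt_ptilde (hφlo w hw.1 (hw.2.trans hv.2))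
  rw [Phi_eq_integral_hazardRate, integral_exp_neg_hazardRate_left_mul_pow hlam hp hsum hp0 hφ0 hφ1
    hφfix hφlo hq, zero_pow_eq, ← intervalIntegral.integral_const_mul]
  refine congrArg _ (intervalIntegral.integral_congr_Ioo_of_le hφ0.le fun v hv => ?_)
  simp only [hprim v hv]
  ring

theorem Psi_eq_integral {lam q φ : ℝ} {p : ℕ → ℝ} (hlam : 0 < lam) (hp : ∀ k, 0 ≤ p k)
    (hsum : Summable p) (hφ0 : 0 ≤ φ) (hφfix : ptilde p φ = φ)
    (hφhi : ∀ z : ℝ, φ < z → z < 1 → ptilde p z < z) (hq : 0 < q) (hE : CondE p φ) (x : ℕ) :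
    Psi lam 0 p 0 (fun _ => 0) φ q x
      = x * ∫ v in φ..(1:ℝ), v ^ (x - 1) *
          Real.exp (-(q * ∫ w in v..(1:ℝ), 1 / (lam * (w - ptilde p w)))) := by
  have hφ1 : φ < 1 := let ⟨_, hφd, hd1, _⟩ := hE; hφd.trans hd1
  have hprim : ∀ v ∈ Ioo φ 1, ∫ w in v..(1 : ℝ), hazardRate lam p q w
      = q * ∫ w in v..(1 : ℝ), 1 / (lam * (w - ptilde p w)) := fun v hv => by
    rw [← intervalIntegral.integral_const_mul]
    exact intervalIntegral.integral_congr_Ioo_of_le hv.2.le fun w hw =>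
      hazardRate_eq_of_ptilde_lt (hφhi w (hv.1.trans hw.1) hw.2)
  rw [Psi_eq_one_sub_integral_hazardRate, integral_exp_neg_hazardRate_right_mul_pow hlam hp hsum hφ0
    hφfix hφhi hq hE, sub_sub_cancel, ← intervalIntegral.integral_const_mul]
  refine intervalIntegral.integral_congr_Ioo_of_le hφ1.le fun v hv => ?_
  simp only [hprim v hv]
  ring

theorem stmt11_general {lam : ℝ} {p : ℕ → ℝ} {φ q : ℝ}
    (hlam : 0 < lam)
    (hp : ∀ k, 0 ≤ p k) (hsum : Summable p) (hp0 : 0 < p 0)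
    (hφ0 : 0 < φ) (hφ1 : φ ≤ 1) (hφfix : ptilde p φ = φ)
    (hφlo : ∀ z : ℝ, 0 < z → z < φ → z < ptilde p z)
    (hφhi : ∀ z : ℝ, φ < z → z < 1 → ptilde p z < z)
    (hq : 0 < q) :
    (∀ x : ℕ, Phi lam 0 p 0 (fun _ => 0) φ 0 q x
      = (if x = 0 then 1 else 0)
        + x * ∫ v in (0:ℝ)..φ, v ^ (x - 1) *
            Real.exp (-(q * ∫ w in (0:ℝ)..v, 1 / (lam * (ptilde p w - w))))) ∧
    (CondE p φ →
      ∀ x : ℕ, Psi lam 0 p 0 (fun _ => 0) φ q x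
        = x * ∫ v in φ..(1:ℝ), v ^ (x - 1) *
            Real.exp (-(q * ∫ w in v..(1:ℝ), 1 / (lam * (w - ptilde p w))))) :=
  ⟨Phi_eq_ite_add_integral hlam hp hsum hp0 hφ0 hφ1 hφfix hφlo hq,
    Psi_eq_integral hlam hp hsum hφ0.le hφfix hφhi hq⟩

/-- with `μ = 0` (so `θ_q = 0`), for every `x`:
`Φ_q(x) = 1_{x=0} + x ∫_0^{φ*} v^{x-1} exp{-q ∫_0^v dw/(λ(p̃(w)-w))} dv`, and, under (E'),
`Ψ_q(x) = x ∫_{φ*}^1 v^{x-1} exp{-q ∫_v^1 dw/(λ(w-p̃(w)))} dv`. -/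
theorem stmt11 (lam : ℝ) (p : ℕ → ℝ) (φ q : ℝ)
    (hlam : 0 < lam)
    (hp : ∀ k, 0 ≤ p k) (hpsum : ∑' k, p k = 1) (hp0 : 0 < p 0) (hp1 : p 1 = 0)
    (hp0lt : p 0 < 1)
    (hφ0 : 0 < φ) (hφ1 : φ ≤ 1) (hφfix : ptilde p φ = φ)
    (hφlo : ∀ z : ℝ, 0 < z → z < φ → z < ptilde p z)
    (hφhi : ∀ z : ℝ, φ < z → z < 1 → ptilde p z < z)
    (hq : 0 < q) :
    (∀ x : ℕ, Phi lam 0 p 0 (fun _ => 0) φ 0 q x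
      = (if x = 0 then 1 else 0)
        + x * ∫ v in (0:ℝ)..φ, v ^ (x - 1) *
            Real.exp (-(q * ∫ w in (0:ℝ)..v, 1 / (lam * (ptilde p w - w))))) ∧
    (CondE p φ →
      ∀ x : ℕ, Psi lam 0 p 0 (fun _ => 0) φ q x
        = x * ∫ v in φ..(1:ℝ), v ^ (x - 1) *
            Real.exp (-(q * ∫ w in v..(1:ℝ), 1 / (lam * (w - ptilde p w))))) := by
  have hsum : Summable p := by
    by_contra hsum
    exact zero_ne_one ((tsum_eq_zero_of_not_summable hsum).symm.trans hpsum)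
  exact stmt11_general hlam hp hsum hp0 hφ0 hφ1 hφfix hφlo hφhi hq
end
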